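/- Let f be a higher energy function, strictly positive on (a,b), where a ∈ ℝ is a zero of f and b is the next zero of f to the right or b = +∞, and let P be the probability distribution on (a,b) with density proportional to f and X a random variable with distribution P. For each N ≥ 2, let (x_n^{(N)})_{n=1}^N be a strictly increasing sequence in (a,b) such that x_1^{(N)} → a as N → ∞ and the left boundary condition 1/(x_2^{(N)} − x_1^{(N)}) − 1/(x_1^{(N)} − x_0) = f'(x_1^{(N)})/f(x_1^{(N)}) holds for some boundary point x_0 ≤ a. Then limsup_{N→∞} sup_h |(f'(x_1^{(N)})/f(x_1^{(N)}))·g_h(x_1^{(N)})| ≤ (2/3)(E_P[X] − a), and limsup_{N→∞} sup_h |g_h(x_1^{(N)})| / (x_2^{(N)} − x_1^{(N)}) ≤ (5/3)(E_P[X] − a), where the suprema are over all differentiable 1-Lipschitz functions h : ℝ → ℝ. -/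

import Mathlib

/-!
Near the left endpoint `a` the density is, up to a positive constant, `(t - a) ^ 2`: the function
`f` is `c p² e^{-t²/2}` and every zero of a Hermite polynomial `p` is simple, because
`p_{n+1}' = (n+1) p_n` and `p_{n+1} = X p_n - p_n'` would push a double zero down to `p_0 = 1`
(`hermite_eval_derivative_ne_zero`). Writing `f t = (t - a) ^ 2 * φ t` with `φ a > 0` gives, as
`x ↓ a`, the limits `(x - a) f'(x) / f(x) → 2` and, by l'Hôpital's rule,
`(1 / f x) ∫_a^x f / (x - a) → 1/3` (`tendsto_logDeriv`, `tendsto_mass_ratio`).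

Put `m = E_P[X] - a`. For a 1-Lipschitz `h` and `t ∈ (a, x)` one has
`|h t - E_P h| ≤ E_P |X - t| ≤ m + (x - a)`, so `|g_h x| ≤ (m + (x - a)) (1 / f x) ∫_a^x f`
uniformly in `h` (`abs_steinG_le`). Multiplying by `f'/f` gives the limit `(2/3) m`. The boundary
condition and `x₀ ≤ a` give `1 / (x₂ - x₁) ≤ f'(x₁)/f(x₁) + 1 / (x₁ - a)`, which is asymptotic to
`3 / (x₁ - a)`, so the second quantity is asymptotically at most `m`, which is below `(5/3) m`
since `m ≥ 0`.
-/

open MeasureTheory Filter Set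

noncomputable section

/-- The probabilists' Hermite polynomial `p_l(x) = (-1)^l e^{x^2/2} (d/dx)^l e^{-x^2/2}`
as a real function. -/
def hermiteFun (l : ℕ) (x : ℝ) : ℝ :=
  (-1 : ℝ) ^ l * Real.exp (x ^ 2 / 2) *
    iteratedDeriv l (fun t => Real.exp (-t ^ 2 / 2)) x

/-- The higher energy function of order `l` with normalizing constant `c`. -/
def heFun (l : ℕ) (c : ℝ) (x : ℝ) : ℝ :=
  c * hermiteFun l x ^ 2 * Real.exp (-x ^ 2 / 2)

/-- `c` is the constant making `heFun l c` a probability density on `ℝ`. -/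
def IsNormalizing (l : ℕ) (c : ℝ) : Prop :=
  0 < c ∧ (∫ x : ℝ, heFun l c x) = 1

/-- `(x n)_{n=1}^N` is an MIW sequence of `f` : strictly increasing, avoiding the
zeros of `f`, and satisfying the MIW recursion for `1 < n < N`. -/
def IsMIW (f : ℝ → ℝ) (N : ℕ) (x : ℕ → ℝ) : Prop :=
  (∀ n, 1 ≤ n → n < N → x n < x (n + 1)) ∧
  (∀ n, 1 ≤ n → n ≤ N → f (x n) ≠ 0) ∧
  (∀ n, 1 < n → n < N →
    1 / (x (n + 1) - x n) - 1 / (x n - x (n - 1)) = deriv f (x n) / f (x n))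

/-- Left boundary condition at `x_0 = -∞`. -/
def LeftBC (f : ℝ → ℝ) (x : ℕ → ℝ) : Prop :=
  1 / (x 2 - x 1) = deriv f (x 1) / f (x 1)

/-- Right boundary condition at `x_{N+1} = +∞`. -/
def RightBC (f : ℝ → ℝ) (N : ℕ) (x : ℕ → ℝ) : Prop :=
  -(1 / (x N - x (N - 1))) = deriv f (x N) / f (x N)

/-- Right boundary condition at a point (`none` denoting `+∞`). -/
def RightBCAt (f : ℝ → ℝ) (N : ℕ) (x : ℕ → ℝ) : Option ℝ → Prop
  | none => -(1 / (x N - x (N - 1))) = deriv f (x N) / f (x N)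
  | some b => x N < b ∧
      1 / (b - x N) - 1 / (x N - x (N - 1)) = deriv f (x N) / f (x N)

/-- `r 1 < ⋯ < r l` enumerates the zeros of `f`. -/
def ZeroEnum (f : ℝ → ℝ) (l : ℕ) (r : ℕ → ℝ) : Prop :=
  (∀ i j, 1 ≤ i → i < j → j ≤ l → r i < r j) ∧
  {y : ℝ | f y = 0} = r '' Set.Icc 1 l

/-- Membership in the region `R_k = (r_k, r_{k+1})`, with the conventions
`r_0 = -∞` and `r_{l+1} = +∞`. -/
def InRegion (l : ℕ) (r : ℕ → ℝ) (k : ℕ) (t : ℝ) : Prop :=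
  (k = 0 ∨ r k < t) ∧ (k = l ∨ t < r (k + 1))

/-- The region `R_k` as a subset of `ℝ`. -/
def regionSet (l : ℕ) (r : ℕ → ℝ) (k : ℕ) : Set ℝ := {t | InRegion l r k t}

/-- The number of points of `(x n)_{n=1}^N` lying in region `R_k`. -/
def regionCount (l : ℕ) (r : ℕ → ℝ) (N : ℕ) (x : ℕ → ℝ) (k : ℕ) : ℕ :=
  Set.ncard {n : ℕ | n ∈ Set.Icc 1 N ∧ InRegion l r k (x n)}

/-- `n(t) = max {0 ≤ k ≤ N : x_k ≤ t}` (convention `x_0 = -∞`); for an increasing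
sequence this is the number of points among `x_1, …, x_N` that are `≤ t`. -/
def nIdx (N : ℕ) (x : ℕ → ℝ) (t : ℝ) : ℕ :=
  Set.ncard {n : ℕ | n ∈ Set.Icc 1 N ∧ x n ≤ t}

/-- `1/(x_{n+1}-x_n) - 1/(x_n-x_{n-1})`, with the conventions `x_0 = -∞`,
`x_{N+1} = +∞` (so the corresponding reciprocals vanish). -/
def gapTerm (N : ℕ) (x : ℕ → ℝ) (n : ℕ) : ℝ :=
  (if n < N then 1 / (x (n + 1) - x n) else 0) -
    (if 1 < n then 1 / (x n - x (n - 1)) else 0)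

/-- The MIW energy `H(x_1,…,x_N)`. -/
def Hfun (N : ℕ) (x : ℕ → ℝ) : ℝ :=
  ∑ n ∈ Finset.Icc 1 N, x n ^ 2 + ∑ n ∈ Finset.Icc 1 N, gapTerm N x n ^ 2

/-- Partial derivative `∂H/∂x_n` evaluated at the configuration `x`. -/
def partialH (N : ℕ) (x : ℕ → ℝ) (n : ℕ) : ℝ :=
  deriv (fun s => Hfun N (Function.update x n s)) (x n)

/-- The empirical distribution `(1/N) ∑_{n=1}^N δ_{x_n}`. -/
def empDist (N : ℕ) (x : ℕ → ℝ) : Measure ℝ :=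
  (N : ENNReal)⁻¹ • ∑ n ∈ Finset.Icc 1 N, Measure.dirac (x n)

/-- The probability measure on `S` with density proportional to `f`. -/
def densMeasure (f : ℝ → ℝ) (S : Set ℝ) : Measure ℝ :=
  (volume.restrict S).withDensity fun t => ENNReal.ofReal (f t / ∫ u in S, f u)

/-- The Stein solution `g_h(x) = (1/f(x)) ∫_a^x f(t)(h(t) - E_P[h]) dt`, where the
integral runs over the part of `S` to the left of `x`. -/
def steinG (f : ℝ → ℝ) (S : Set ℝ) (h : ℝ → ℝ) (x : ℝ) : ℝ :=
  (1 / f x) * ∫ t in S ∩ Set.Iio x, f t * (h t - ∫ s, h s ∂(densMeasure f S))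

/-- The intermediate density `ρ(t) = 1/((N-1)(x_{n(t)+1} - x_{n(t)}))` on `(x_1, x_N)`. -/
def interDens (N : ℕ) (x : ℕ → ℝ) (t : ℝ) : ℝ :=
  Set.indicator (Set.Ioo (x 1) (x N))
    (fun u => 1 / (((N : ℝ) - 1) * (x (nIdx N x u + 1) - x (nIdx N x u)))) t

/-- The intermediate distribution `R` with density `ρ`. -/
def interDist (N : ℕ) (x : ℕ → ℝ) : Measure ℝ :=
  volume.withDensity fun t => ENNReal.ofReal (interDens N x t)

open scoped Topology

/-! ### Hermite polynomials and the density -/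

open Polynomial in
theorem derivative_hermite_succ (n : ℕ) :
    derivative (hermite (n + 1)) = (n + 1 : ℤ[X]) * hermite n := by
  induction n with
  | zero => simp
  | succ n ih =>
    rw [hermite_succ (n + 1), derivative_sub, derivative_mul, derivative_X, ih, hermite_succ n]
    have h : derivative ((n + 1 : ℤ[X]) * hermite n) = (n + 1 : ℤ[X]) * derivative (hermite n) := by
      have h0 : derivative (n + 1 : ℤ[X]) = 0 := by simp
      rw [derivative_mul, h0]; ring
    rw [h]; push_cast; ring

open Polynomial in
/-- The real zeros of the Hermite polynomials are simple. -/
theorem hermite_eval_derivative_ne_zero (l : ℕ) (a : ℝ) (h0 : aeval a (hermite l) = 0) :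
    aeval a (derivative (hermite l)) ≠ 0 := by
  induction l with
  | zero => simp at h0
  | succ n ih =>
    intro h1
    rw [derivative_hermite_succ, map_mul] at h1
    have h2 : aeval a (hermite n) = 0 := by
      rcases mul_eq_zero.1 h1 with h | h
      · exfalso
        simp at h
        exact absurd h (by positivity)
      · exact h
    rw [hermite_succ, map_sub, map_mul, h2, mul_zero, zero_sub, neg_eq_zero] at h0
    exact ih h2 h0

open Polynomial in
theorem hermiteFun_eq (l : ℕ) (x : ℝ) : hermiteFun l x = aeval x (hermite l) := by
  have h : (fun t : ℝ => Real.exp (-t ^ 2 / 2)) = fun t => Real.exp (-(t ^ 2 / 2)) := by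
    funext t; rw [neg_div]
  rw [hermiteFun, iteratedDeriv_eq_iterate, h, hermite_eq_deriv_gaussian']
  ring

/-- A real polynomial times the Gaussian weight is integrable. -/
theorem integrable_polynomial_mul_gaussian (P : Polynomial ℝ) :
    Integrable fun t : ℝ => P.eval t * Real.exp (-t ^ 2 / 2) := by
  simp_rw [Polynomial.eval_eq_sum_range, Finset.sum_mul]
  refine integrable_finsetSum _ fun i _ => ?_
  have h := (integrable_rpow_mul_exp_neg_mul_sq (b := 1 / 2) (by norm_num) (s := i)
    (by have : (0 : ℝ) ≤ i := by positivity
        linarith)).const_mul (P.coeff i)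
  refine h.congr (Eventually.of_forall fun t => ?_)
  simp only [Real.rpow_natCast]
  rw [mul_assoc, show -(1 / 2) * t ^ 2 = -t ^ 2 / 2 by ring]

theorem integrable_heFun (l : ℕ) (c : ℝ) : Integrable (heFun l c) := by
  have h := integrable_polynomial_mul_gaussian
    (Polynomial.C c * ((Polynomial.hermite l).map (algebraMap ℤ ℝ)) ^ 2)
  refine h.congr (Eventually.of_forall fun t => ?_)
  simp [heFun, hermiteFun_eq, Polynomial.aeval_def, Polynomial.eval_map]

theorem integrable_id_mul_heFun (l : ℕ) (c : ℝ) : Integrable fun t => heFun l c t * t := by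
  have h := integrable_polynomial_mul_gaussian
    (Polynomial.C c * ((Polynomial.hermite l).map (algebraMap ℤ ℝ)) ^ 2 * Polynomial.X)
  refine h.congr (Eventually.of_forall fun t => ?_)
  simp [heFun, hermiteFun_eq, Polynomial.aeval_def, Polynomial.eval_map]
  ring

/-- At a zero `a`, `f` vanishes to order exactly two. -/
theorem heFun_factor (l : ℕ) (c : ℝ) (hc : 0 < c) (a : ℝ) (ha : heFun l c a = 0) :
    ∃ φ : ℝ → ℝ, ContDiff ℝ 1 φ ∧ 0 < φ a ∧ ∀ t, heFun l c t = (t - a) ^ 2 * φ t := by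
  set P : Polynomial ℝ := (Polynomial.hermite l).map (algebraMap ℤ ℝ) with hP
  have hPe : ∀ t, hermiteFun l t = P.eval t := fun t => by
    simp [hermiteFun_eq, hP, Polynomial.aeval_def, Polynomial.eval_map]
  have hPa : P.eval a = 0 := by
    rw [← hPe]
    rw [heFun] at ha
    have := Real.exp_pos (-a ^ 2 / 2)
    simpa [hc.ne', this.ne'] using ha
  obtain ⟨Q, hQ⟩ := Polynomial.dvd_iff_isRoot.2 hPa
  have hQa : Q.eval a ≠ 0 := by
    have h1 := hermite_eval_derivative_ne_zero l a (by rw [← hermiteFun_eq, hPe, hPa])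
    have h2 : Polynomial.aeval a (Polynomial.derivative (Polynomial.hermite l))
        = (Polynomial.derivative P).eval a := by
      rw [hP, Polynomial.derivative_map, Polynomial.eval_map, Polynomial.aeval_def]
    rw [h2, hQ] at h1
    simpa [Polynomial.derivative_mul] using h1
  refine ⟨fun t => c * Q.eval t ^ 2 * Real.exp (-t ^ 2 / 2), ?_, by positivity, fun t => ?_⟩
  · have : ContDiff ℝ 1 fun t => Q.eval t := by simpa using Q.contDiff_aeval (𝕜 := ℝ) 1
    fun_prop
  · rw [heFun, hPe, hQ]
    simp
    ring

/-! ### Asymptotics at a zero of order two -/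

section Local

variable {f φ : ℝ → ℝ} {a : ℝ}

/-- A zero of order two has logarithmic derivative asymptotic to `2 / (x - a)`. -/
theorem tendsto_logDeriv (hφ : ContDiff ℝ 1 φ) (hφa : 0 < φ a)
    (hf : ∀ t, f t = (t - a) ^ 2 * φ t) :
    Tendsto (fun x => (x - a) * (deriv f x / f x)) (𝓝[>] a) (𝓝 2) := by
  have hlim : Tendsto (fun x => 2 + (x - a) * (deriv φ x / φ x)) (𝓝[>] a) (𝓝 2) := by
    have hc : ContinuousAt (fun x => 2 + (x - a) * (deriv φ x / φ x)) a := by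
      have h1 : ContinuousAt (deriv φ) a := (hφ.continuous_deriv le_rfl).continuousAt
      have h2 : ContinuousAt φ a := hφ.continuous.continuousAt
      exact continuousAt_const.add
        ((continuousAt_id.sub continuousAt_const).mul (h1.div h2 hφa.ne'))
    have h := hc.tendsto
    simp only [sub_self, zero_mul, add_zero] at h
    exact h.mono_left nhdsWithin_le_nhds
  refine hlim.congr' ?_
  have hpos : ∀ᶠ x in 𝓝[>] a, 0 < φ x :=
    nhdsWithin_le_nhds (hφ.continuous.continuousAt.eventually (lt_mem_nhds hφa))
  filter_upwards [hpos, self_mem_nhdsWithin] with x hx hxa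
  have hxa' : x - a ≠ 0 := (sub_pos.2 hxa).ne'
  have hd : HasDerivAt f (2 * (x - a) * φ x + (x - a) ^ 2 * deriv φ x) x := by
    have e : f = fun t => (t - a) ^ 2 * φ t := funext hf
    rw [e]
    have h1 : HasDerivAt (fun t => (t - a) ^ 2) (2 * (x - a)) x := by
      simpa using ((hasDerivAt_id x).sub_const a).fun_pow 2
    exact h1.mul ((hφ.differentiable (by norm_num)).differentiableAt.hasDerivAt)
  rw [hd.deriv, hf]
  field_simp

/-- For a zero of order two, l'Hôpital's rule gives `(∫_a^x f) / f x ~ (x - a) / 3`. -/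
theorem tendsto_mass_ratio (hφ : Continuous φ) (hφa : 0 < φ a)
    (hf : ∀ t, f t = (t - a) ^ 2 * φ t) :
    Tendsto (fun x => (1 / f x * ∫ t in a..x, f t) / (x - a)) (𝓝[>] a) (𝓝 (1 / 3)) := by
  have hfc : Continuous f := by rw [show f = _ from funext hf]; fun_prop
  have key : Tendsto (fun x => (∫ t in a..x, f t) / (x - a) ^ 3) (𝓝[>] a) (𝓝 (φ a / 3)) := by
    refine HasDerivAt.lhopital_zero_nhdsGT (f' := f) (g' := fun x => 3 * (x - a) ^ 2)
      ?_ ?_ ?_ ?_ ?_ ?_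
    · exact Eventually.of_forall fun x => hfc.integral_hasStrictDerivAt a x |>.hasDerivAt
    · refine Eventually.of_forall fun x => ?_
      simpa using ((hasDerivAt_id x).sub_const a).fun_pow 3
    · filter_upwards [self_mem_nhdsWithin] with x hx
      have : 0 < x - a := sub_pos.2 hx
      positivity
    · have : Continuous fun x => ∫ t in a..x, f t :=
        intervalIntegral.continuous_primitive (fun _ _ => hfc.intervalIntegrable _ _) a
      simpa using this.continuousAt.tendsto.mono_left (nhdsWithin_le_nhds (a := a) (s := Ioi a))
    · have : Continuous fun x : ℝ => (x - a) ^ 3 := by fun_prop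
      simpa using this.continuousAt.tendsto.mono_left (nhdsWithin_le_nhds (a := a) (s := Ioi a))
    · have h : Tendsto (fun x => φ x / 3) (𝓝[>] a) (𝓝 (φ a / 3)) :=
        ((hφ.div_const 3).continuousAt.tendsto).mono_left nhdsWithin_le_nhds
      refine h.congr' ?_
      filter_upwards [self_mem_nhdsWithin] with x hx
      have : x - a ≠ 0 := (sub_pos.2 hx).ne'
      rw [hf]
      field_simp
  have hφt : Tendsto φ (𝓝[>] a) (𝓝 (φ a)) := hφ.continuousAt.tendsto.mono_left nhdsWithin_le_nhds
  have h := key.div hφt hφa.ne'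
  rw [show φ a / 3 / φ a = 1 / 3 by field_simp] at h
  refine h.congr' ?_
  filter_upwards with x
  simp only [Pi.div_apply]
  rw [hf x]
  generalize (∫ t in a..x, f t) = I
  generalize x - a = y
  ring

end Local

/-! ### The Stein solution -/

section Measure

variable {f : ℝ → ℝ} {S : Set ℝ}

theorem isProbabilityMeasure_densMeasure (hf : IntegrableOn f S) (hSm : MeasurableSet S)
    (hpos : ∀ t ∈ S, 0 < f t) (hZ : 0 < ∫ u in S, f u) :
    IsProbabilityMeasure (densMeasure f S) := by
  constructor
  rw [densMeasure, withDensity_apply _ MeasurableSet.univ, Measure.restrict_univ,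
    ← ofReal_integral_eq_lintegral_ofReal (hf.div_const _)]
  · rw [integral_div, div_self hZ.ne', ENNReal.ofReal_one]
  · filter_upwards [ae_restrict_mem hSm] with t ht
    exact div_nonneg (hpos t ht).le hZ.le

theorem integrable_id_densMeasure (hf : IntegrableOn f S) (hft : IntegrableOn (fun t => f t * t) S)
    (hSm : MeasurableSet S) (hpos : ∀ t ∈ S, 0 < f t) (hZ : 0 < ∫ u in S, f u) :
    Integrable (fun t => t) (densMeasure f S) := by
  rw [densMeasure, integrable_withDensity_iff_integrable_smul₀'
    ((hf.aestronglyMeasurable.aemeasurable.div_const _).ennreal_ofReal)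
    (Eventually.of_forall fun _ => ENNReal.ofReal_lt_top)]
  refine (hft.div_const (∫ u in S, f u)).congr ?_
  filter_upwards [ae_restrict_mem hSm] with t ht
  rw [ENNReal.toReal_ofReal (div_nonneg (hpos t ht).le hZ.le), smul_eq_mul]
  ring

theorem ae_mem_densMeasure (hSm : MeasurableSet S) : ∀ᵐ t ∂(densMeasure f S), t ∈ S :=
  (withDensity_absolutelyContinuous _ _).ae_le (ae_restrict_mem hSm)

variable {a : ℝ}

/-- Centring a 1-Lipschitz function: `|h t - E h| ≤ E |X - t| ≤ (E X - a) + (t - a)`. -/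
theorem abs_sub_integral_le {μ : Measure ℝ} [IsProbabilityMeasure μ]
    (hid : Integrable (fun t => t) μ) (hμ : ∀ᵐ s ∂μ, a < s) {h : ℝ → ℝ}
    (hh : LipschitzWith 1 h) {t : ℝ} (hat : a < t) :
    |h t - ∫ s, h s ∂μ| ≤ ((∫ s, s ∂μ) - a) + (t - a) := by
  have hlip : ∀ s, |h t - h s| ≤ |t - s| := fun s => by
    simpa [Real.dist_eq] using hh.dist_le_mul t s
  have hhi : Integrable h μ := by
    have h1 : Integrable (fun s => h t - h s) μ := by
      refine ((integrable_const t).sub hid).mono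
        (continuous_const.sub hh.continuous).aestronglyMeasurable (Eventually.of_forall fun s => ?_)
      simpa using hlip s
    refine ((integrable_const (h t)).sub h1).congr (Eventually.of_forall fun s => ?_)
    simp
  have e1 : h t - ∫ s, h s ∂μ = ∫ s, (h t - h s) ∂μ := by
    rw [integral_sub (integrable_const _) hhi]; simp
  have e2 : ∫ s, ((t - a) + (s - a)) ∂μ = ((∫ s, s ∂μ) - a) + (t - a) := by
    have h1 : (fun s : ℝ => (t - a) + (s - a)) = fun s => (t - a - a) + s := by funext s; ring
    rw [h1, integral_add (integrable_const _) hid]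
    simp; ring
  rw [e1, ← e2, ← Real.norm_eq_abs]
  refine norm_integral_le_of_norm_le
    ((integrable_const _).add (hid.sub (integrable_const _))) ?_
  filter_upwards [hμ] with s hs
  rw [Real.norm_eq_abs]
  refine (hlip s).trans (abs_le.2 ⟨by linarith, by linarith⟩)

/-- The bound on the Stein solution, uniform over 1-Lipschitz test functions. -/
theorem abs_steinG_le (hf : IntegrableOn f S) (hft : IntegrableOn (fun t => f t * t) S)
    (hSm : MeasurableSet S) (hpos : ∀ t ∈ S, 0 < f t) (hZ : 0 < ∫ u in S, f u)
    (hSa : ∀ t ∈ S, a < t) {h : ℝ → ℝ} (hh : LipschitzWith 1 h) {x : ℝ} (hx : x ∈ S)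
    (hSx : S ∩ Iio x = Ioo a x) :
    |steinG f S h x| ≤ (1 / f x * ∫ t in a..x, f t)
      * (((∫ t, t ∂(densMeasure f S)) - a) + (x - a)) := by
  have := isProbabilityMeasure_densMeasure hf hSm hpos hZ
  have hid := integrable_id_densMeasure hf hft hSm hpos hZ
  have hμ : ∀ᵐ s ∂(densMeasure f S), a < s := (ae_mem_densMeasure hSm).mono hSa
  have hsub : Ioo a x ⊆ S := hSx ▸ inter_subset_left
  have hxa := hSa x hx
  set m := (∫ t, t ∂(densMeasure f S)) - a
  rw [steinG, hSx, abs_mul, abs_of_pos (one_div_pos.2 (hpos x hx)), mul_assoc,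
    intervalIntegral.integral_of_le hxa.le, integral_Ioc_eq_integral_Ioo]
  refine mul_le_mul_of_nonneg_left ?_ (one_div_pos.2 (hpos x hx)).le
  rw [← integral_mul_const, ← Real.norm_eq_abs]
  refine norm_integral_le_of_norm_le ((hf.mono_set hsub).mul_const _) ?_
  filter_upwards [ae_restrict_mem measurableSet_Ioo] with t ht
  rw [norm_mul, Real.norm_of_nonneg (hpos t (hsub ht)).le, Real.norm_eq_abs]
  refine mul_le_mul_of_nonneg_left ?_ (hpos t (hsub ht)).le
  have := abs_sub_integral_le hid hμ hh ht.1
  linarith [ht.2]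

end Measure

/-! ### The boundary bounds -/

theorem steinG_boundary_limsup_bounds (l : ℕ) (c : ℝ) (hc : IsNormalizing l c)
    (a : ℝ) (ha : heFun l c a = 0)
    (b : EReal) (hab : (a : EReal) < b)
    (hb : b = ⊤ ∨ ∃ b' : ℝ, b = (b' : EReal) ∧ heFun l c b' = 0)
    (S : Set ℝ) (hS : S = {t : ℝ | (a : EReal) < (t : EReal) ∧ (t : EReal) < b})
    (hpos : ∀ t ∈ S, 0 < heFun l c t)
    (x : ℕ → ℕ → ℝ)
    (hseq : ∀ N, 2 ≤ N →
      (∀ n, 1 ≤ n → n ≤ N → x N n ∈ S) ∧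
      (∀ n, 1 ≤ n → n < N → x N n < x N (n + 1)) ∧
      (1 / (x N 2 - x N 1) = deriv (heFun l c) (x N 1) / heFun l c (x N 1) ∨
        ∃ x0 ≤ a, 1 / (x N 2 - x N 1) - 1 / (x N 1 - x0)
          = deriv (heFun l c) (x N 1) / heFun l c (x N 1)))
    (hx1 : Tendsto (fun N => x N 1) atTop (nhds a)) :
    ∀ ε > (0 : ℝ), ∀ᶠ N in atTop,
      ∀ h : ℝ → ℝ, Differentiable ℝ h → LipschitzWith 1 h →
        |(deriv (heFun l c) (x N 1) / heFun l c (x N 1))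
            * steinG (heFun l c) S h (x N 1)|
          ≤ (2 / 3) * ((∫ t : ℝ, t ∂(densMeasure (heFun l c) S)) - a) + ε ∧
        |steinG (heFun l c) S h (x N 1)| / (x N 2 - x N 1)
          ≤ (5 / 3) * ((∫ t : ℝ, t ∂(densMeasure (heFun l c) S)) - a) + ε := by
  obtain ⟨φ, hφ, hφa, hfφ⟩ := heFun_factor l c hc.1 a ha
  set f := heFun l c with hfdef
  have hSa : ∀ t ∈ S, a < t := fun t ht => by
    rw [hS] at ht; exact EReal.coe_lt_coe_iff.1 ht.1
  have hSo : IsOpen S := by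
    rw [hS]
    exact (isOpen_Ioo (a := (a : EReal)) (b := b)).preimage continuous_coe_real_ereal
  have hSm : MeasurableSet S := hSo.measurableSet
  have hSx : ∀ y ∈ S, S ∩ Iio y = Ioo a y := fun y hy => by
    ext t
    refine ⟨fun ht => ⟨hSa t ht.1, ht.2⟩, fun ht => ⟨?_, ht.2⟩⟩
    rw [hS] at hy ⊢
    exact ⟨EReal.coe_lt_coe_iff.2 ht.1, (EReal.coe_lt_coe_iff.2 ht.2).trans hy.2⟩
  have hx1S : ∀ N, 2 ≤ N → x N 1 ∈ S := fun N hN => (hseq N hN).1 1 le_rfl (by omega)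
  have hf : IntegrableOn f S := (integrable_heFun l c).integrableOn
  have hft : IntegrableOn (fun t => f t * t) S := (integrable_id_mul_heFun l c).integrableOn
  have hZ : 0 < ∫ u in S, f u := by
    rw [setIntegral_pos_iff_support_of_nonneg_ae
      (by filter_upwards [ae_restrict_mem hSm] with t ht using (hpos t ht).le) hf,
      inter_eq_right.2 (show S ⊆ Function.support f from fun t ht => (hpos t ht).ne')]
    exact hSo.measure_pos volume ⟨_, hx1S 2 le_rfl⟩
  have hprob := isProbabilityMeasure_densMeasure hf hSm hpos hZ
  have hid := integrable_id_densMeasure hf hft hSm hpos hZ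
  set m := (∫ t : ℝ, t ∂(densMeasure f S)) - a with hm
  have hm0 : 0 ≤ m := by
    have h1 : ∫ _ : ℝ, a ∂(densMeasure f S) ≤ ∫ t : ℝ, t ∂(densMeasure f S) :=
      integral_mono_ae (integrable_const _) hid
        ((ae_mem_densMeasure hSm).mono fun t ht => (hSa t ht).le)
    simp at h1
    linarith
  -- `M y` is the mass of `(a, y)` relative to `f y`, asymptotic to `(y - a) / 3`.
  set M : ℝ → ℝ := fun y => 1 / f y * ∫ t in a..y, f t with hM
  have hM0 : ∀ y ∈ S, 0 ≤ M y := fun y hy => by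
    refine mul_nonneg (one_div_pos.2 (hpos y hy)).le
      (intervalIntegral.integral_nonneg (hSa y hy).le fun t _ => ?_)
    rw [hfdef, heFun]
    have := hc.1
    positivity
  have L1 := tendsto_logDeriv hφ hφa hfφ
  have L2 := tendsto_mass_ratio hφ.continuous hφa hfφ
  have L3 : Tendsto (fun y => m + (y - a)) (𝓝[>] a) (𝓝 m) := by
    have : Continuous fun y : ℝ => m + (y - a) := by fun_prop
    simpa using this.continuousAt.tendsto.mono_left (nhdsWithin_le_nhds (a := a) (s := Ioi a))
  have A : Tendsto (fun y => |deriv f y / f y| * (M y * (m + (y - a)))) (𝓝[>] a)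
      (𝓝 (2 / 3 * m)) := by
    have h := (L1.abs.mul L2).mul L3
    rw [show |(2 : ℝ)| * (1 / 3) * m = 2 / 3 * m by norm_num] at h
    refine h.congr' ?_
    filter_upwards [self_mem_nhdsWithin] with y hy
    have hy' : 0 < y - a := sub_pos.2 hy
    simp only [hM]
    rw [abs_mul, abs_of_pos hy']
    field_simp
  have B : Tendsto (fun y => (deriv f y / f y + 1 / (y - a)) * (M y * (m + (y - a)))) (𝓝[>] a)
      (𝓝 m) := by
    have h := ((L1.add_const 1).mul L2).mul L3
    rw [show ((2 : ℝ) + 1) * (1 / 3) * m = m by ring] at h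
    refine h.congr' ?_
    filter_upwards [self_mem_nhdsWithin] with y hy
    have hy' : 0 < y - a := sub_pos.2 hy
    have e : (y - a) * (deriv f y / f y) + 1 = (y - a) * (deriv f y / f y + 1 / (y - a)) := by
      rw [mul_add, mul_one_div_cancel hy'.ne']
    rw [e]
    generalize deriv f y / f y + 1 / (y - a) = r
    simp only [hM]
    field_simp
  have hxt : Tendsto (fun N => x N 1) atTop (𝓝[>] a) :=
    tendsto_nhdsWithin_iff.2 ⟨hx1, (eventually_ge_atTop 2).mono fun N hN => hSa _ (hx1S N hN)⟩
  intro ε hε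
  filter_upwards [eventually_ge_atTop 2,
    (A.comp hxt).eventually (gt_mem_nhds (show 2 / 3 * m < 2 / 3 * m + ε by linarith)),
    (B.comp hxt).eventually (gt_mem_nhds (show m < m + ε by linarith))] with N hN hA hB h _ hh
  simp only [Function.comp_apply] at hA hB
  obtain ⟨-, hmono, hbc⟩ := hseq N hN
  have hxS := hx1S N hN
  have hxa : 0 < x N 1 - a := sub_pos.2 (hSa _ hxS)
  have hg := abs_steinG_le hf hft hSm hpos hZ hSa hh hxS (hSx _ hxS)
  constructor
  · rw [abs_mul]
    exact (mul_le_mul_of_nonneg_left hg (abs_nonneg _)).trans hA.le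
  · -- Since `x₀ ≤ a < x₁`, replacing `x₀` by `a` can only increase the right-hand side.
    have hgap : 1 / (x N 2 - x N 1) ≤ deriv f (x N 1) / f (x N 1) + 1 / (x N 1 - a) := by
      rcases hbc with h1 | ⟨x0, hx0, h1⟩
      · rw [h1]
        linarith [one_div_pos.2 hxa]
      · have : 1 / (x N 1 - x0) ≤ 1 / (x N 1 - a) :=
          one_div_le_one_div_of_le hxa (by linarith)
        linarith
    have hpos' : 0 < x N 2 - x N 1 := sub_pos.2 (hmono 1 le_rfl (by omega))
    calc |steinG f S h (x N 1)| / (x N 2 - x N 1)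
        = 1 / (x N 2 - x N 1) * |steinG f S h (x N 1)| := by ring
      _ ≤ (deriv f (x N 1) / f (x N 1) + 1 / (x N 1 - a)) * (M (x N 1) * (m + (x N 1 - a))) :=
          mul_le_mul hgap hg (abs_nonneg _) ((one_div_pos.2 hpos').le.trans hgap)
      _ ≤ m + ε := hB.le
      _ ≤ 5 / 3 * m + ε := by linarith
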